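/- arXiv:2203.00711 — 3 statements merged into one kernel-verified Lean document; each statement's English description precedes it below -/
import Mathlib

section
/- Assume α > 1, both λ and β are nondecreasing on [t₀,∞), b(t) > β'(t) + β(t)/t (equivalently w(t) > 0) for every t ≥ t₀, there exists ε ∈ (0, α−1) with (α−3)·w(t) − t·w'(t) ≥ ε·b(t) for every t ≥ t₀, ∫_{t₀}^{∞} [ λ'(t)²·t³·β(t)²/λ(t)⁴ − λ'(t)·t²·b(t)/(2·λ(t)²) ]_+ dt < +∞ (where [·]_+ denotes the positive part), and there exists C > 0 with (d/dt)(t²·b(t)) ≤ C·t·b(t) for every t ≥ t₀. Then t·‖ẋ(t)‖ → 0 as t → +∞, i.e. ‖ẋ(t)‖ = o(1/t). -/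
open Set MeasureTheory Filter Real

noncomputable section

/-- Convexity for extended-real-valued functions. -/
def EConvexOn {H : Type*} [NormedAddCommGroup H] [NormedSpace ℝ H] (f : H → EReal) : Prop :=
  ∀ x y : H, ∀ a c : ℝ, 0 ≤ a → 0 ≤ c → a + c = 1 →
    f (a • x + c • y) ≤ (a : EReal) * f x + (c : EReal) * f y

/-- `p` is the proximal point of `f` with parameter `l` at `x`, i.e. the (unique) minimizer of
`y ↦ f y + ‖x - y‖² / (2l)`. -/
def IsProxPt {H : Type*} [NormedAddCommGroup H] [InnerProductSpace ℝ H]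
    (f : H → EReal) (l : ℝ) (x p : H) : Prop :=
  ∀ y : H, f p + ((‖x - p‖ ^ 2 / (2 * l) : ℝ) : EReal)
      ≤ f y + ((‖x - y‖ ^ 2 / (2 * l) : ℝ) : EReal)

/-- The Moreau envelope of `f` with parameter `l` (as a real number). -/
def moreau {H : Type*} [NormedAddCommGroup H] [InnerProductSpace ℝ H]
    (f : H → EReal) (l : ℝ) (x : H) : ℝ :=
  (⨅ y : H, f y + ((‖x - y‖ ^ 2 / (2 * l) : ℝ) : EReal)).toReal

theorem aux_prox_ne_top {H : Type*} [NormedAddCommGroup H] [InnerProductSpace ℝ H]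
    (Φ : H → EReal) (l : ℝ) (x p y : H) (hp : IsProxPt Φ l x p) (hy : Φ y ≠ ⊤) :
    Φ p ≠ ⊤ := by
  intro h
  have := hp y
  rw [h, EReal.top_add_coe, top_le_iff] at this
  exact (EReal.add_ne_top hy (EReal.coe_ne_top _)) this

theorem aux_subgrad {H : Type*} [NormedAddCommGroup H] [InnerProductSpace ℝ H]
    (Φ : H → EReal) (hΦbot : ∀ y, Φ y ≠ ⊥) (hc : EConvexOn Φ) (l : ℝ) (hl : 0 < l)
    (x p y : H) (hp : IsProxPt Φ l x p) (hy : Φ y ≠ ⊤) :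
    (Φ p).toReal + inner ℝ (l⁻¹ • (x - p)) (y - p) ≤ (Φ y).toReal := by
  have hpt := aux_prox_ne_top Φ l x p y hp hy
  obtain ⟨fp, hfp⟩ : ∃ r : ℝ, Φ p = r := ⟨_, (EReal.coe_toReal hpt (hΦbot p)).symm⟩
  obtain ⟨fy, hfy⟩ : ∃ r : ℝ, Φ y = r := ⟨_, (EReal.coe_toReal hy (hΦbot y)).symm⟩
  rw [hfp, hfy, EReal.toReal_coe, EReal.toReal_coe, inner_smul_left]
  simp only [conj_trivial]
  have key : ∀ a : ℝ, 0 < a → a ≤ 1 →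
      fp + l⁻¹ * inner ℝ (x - p) (y - p) - fy ≤ a * (‖y - p‖ ^ 2 / (2 * l)) := by
    intro a ha ha1
    have h1 := hp ((1 - a) • p + a • y)
    have h2 := hc p y (1 - a) a (by linarith) ha.le (by ring)
    have h3 := h1.trans (add_le_add_left h2 _)
    rw [hfp, hfy] at h3
    have h4 : fp + ‖x - p‖ ^ 2 / (2 * l) ≤ ((1 - a) * fp + a * fy)
        + ‖x - ((1 - a) • p + a • y)‖ ^ 2 / (2 * l) := by
      exact_mod_cast h3
    have h5 : x - ((1 - a) • p + a • y) = (x - p) - a • (y - p) := by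
      module
    rw [h5, norm_sub_sq_real (x - p) (a • (y - p)), inner_smul_right, norm_smul, mul_pow, Real.norm_eq_abs, sq_abs] at h4
    have h6 : a * (fp + l⁻¹ * inner ℝ (x - p) (y - p) - fy) ≤ a * (a * (‖y - p‖ ^ 2 / (2 * l))) := by
      have : (‖x - p‖ ^ 2 - 2 * (a * inner ℝ (x - p) (y - p)) + a ^ 2 * ‖y - p‖ ^ 2) / (2 * l)
        = ‖x - p‖ ^ 2 / (2 * l) - a * (l⁻¹ * inner ℝ (x - p) (y - p)) + a * (a * (‖y - p‖ ^ 2 / (2 * l))) := by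
        field_simp
      rw [this] at h4
      linarith
    exact le_of_mul_le_mul_left h6 ha
  have hlim : Tendsto (fun a : ℝ => a * (‖y - p‖ ^ 2 / (2 * l))) (nhdsWithin 0 (Ioi 0)) (nhds 0) := by
    have : Continuous (fun a : ℝ => a * (‖y - p‖ ^ 2 / (2 * l))) := by fun_prop
    have := this.tendsto 0
    rw [zero_mul] at this
    exact this.mono_left nhdsWithin_le_nhds
  have := ge_of_tendsto hlim (b := fp + l⁻¹ * inner ℝ (x - p) (y - p) - fy) (by
    filter_upwards [Ioc_mem_nhdsGT (show (0:ℝ) < 1 by norm_num)] with a ha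
    exact key a ha.1 ha.2)
  linarith

theorem aux_squeeze (f L U : ℝ → ℝ) (d t : ℝ) (hL : HasDerivAt L d t) (hU : HasDerivAt U d t)
    (hLt : L t = 0) (hUt : U t = 0)
    (h : ∀ᶠ s in nhds t, L s ≤ f s - f t ∧ f s - f t ≤ U s) : HasDerivAt f d t := by
  rw [hasDerivAt_iff_isLittleO] at *
  rw [Asymptotics.isLittleO_iff] at *
  intro c hc
  filter_upwards [hL hc, hU hc, h] with s h1 h2 h3
  simp only [Real.norm_eq_abs, smul_eq_mul, hLt, hUt, sub_zero] at *
  rw [abs_le] at *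
  constructor <;> linarith [h1.1, h2.2, h3.1, h3.2]

theorem aux_mono {H : Type*} [NormedAddCommGroup H] [InnerProductSpace ℝ H]
    (g p : ℝ → H) (t : ℝ) (g' p' : H) (hg : HasDerivAt g g' t) (hp : HasDerivAt p p' t)
    (h : ∀ᶠ s in nhds t, 0 ≤ inner ℝ (g s - g t) (p s - p t)) : 0 ≤ inner ℝ g' p' := by
  rw [hasDerivAt_iff_tendsto_slope] at hg hp
  have := hg.inner (𝕜 := ℝ) hp
  refine ge_of_tendsto this ?_
  filter_upwards [h.filter_mono nhdsWithin_le_nhds] with s hs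
  rw [slope_def_module, slope_def_module, inner_smul_left, inner_smul_right]
  simp only [conj_trivial]
  rw [← mul_assoc]
  exact mul_nonneg (mul_self_nonneg _) hs

theorem aux_fderiv {H : Type*} [NormedAddCommGroup H] [InnerProductSpace ℝ H]
    (f : ℝ → ℝ) (g p : ℝ → H) (t : ℝ) (g' p' : H) (hg : HasDerivAt g g' t) (hp : HasDerivAt p p' t)
    (h : ∀ᶠ s in nhds t, f t + inner ℝ (g t) (p s - p t) ≤ f s ∧ f s + inner ℝ (g s) (p t - p s) ≤ f t) :
    HasDerivAt f (inner ℝ (g t) p') t := by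
  have h1 : HasDerivAt (fun s => p s - p t) p' t := hp.sub_const _
  have hU := hg.inner ℝ h1
  have hL := (hasDerivAt_const t (g t)).inner ℝ h1
  refine aux_squeeze f _ _ _ t (by simpa using hL) (by simpa using hU) (by simp) (by simp) ?_
  filter_upwards [h] with s hs
  have : inner ℝ (g s) (p t - p s) = - inner ℝ (g s) (p s - p t) := by
    rw [← inner_neg_right, neg_sub]
  constructor <;> linarith [hs.1, hs.2]

theorem aux_scalar (t₁ κ C M : ℝ) (ht₁ : 0 < t₁) (hκ : 0 < κ) (hC : 0 ≤ C) 
    (E W h k E' W' : ℝ → ℝ)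
    (hE : ∀ t ≥ t₁, HasDerivAt E (E' t) t) (hW : ∀ t ≥ t₁, HasDerivAt W (W' t) t)
    (hE0 : ∀ t ≥ t₁, 0 ≤ E t) (hW0 : ∀ t ≥ t₁, 0 ≤ W t)
    (hE' : ∀ t ≥ t₁, E' t ≤ - (κ * h t))
    (hW' : ∀ t ≥ t₁, W' t ≤ C * h t + M * k t)
    (hWh : ∀ t ≥ t₁, W t ≤ t * h t)
    (hk : IntegrableOn k (Ici t₁)) : Tendsto W atTop (nhds 0) := by
  have hh0 : ∀ t ≥ t₁, 0 ≤ h t := fun t ht => by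
    have h1 := (hW0 t ht).trans (hWh t ht)
    exact nonneg_of_mul_nonneg_right h1 (by linarith)
  have anti : ∀ (F : ℝ → ℝ) (l : ℝ → ℝ), (∀ t ≥ t₁, HasDerivAt F (l t) t) → 
      (∀ t ≥ t₁, l t ≤ 0) → AntitoneOn F (Ici t₁) := by
    intro F l h1 h2
    refine antitoneOn_of_deriv_nonpos (convex_Ici _) 
      (fun t ht => (h1 t ht).continuousAt.continuousWithinAt) 
      (fun t ht => (h1 t (interior_subset ht)).differentiableAt.differentiableWithinAt) ?_
    intro t ht
    rw [(h1 t (interior_subset ht)).deriv]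
    exact h2 t (interior_subset ht)
  have conv : ∀ (F : ℝ → ℝ) (m : ℝ), AntitoneOn F (Ici t₁) → (∀ t ≥ t₁, m ≤ F t) → 
      ∃ L, Tendsto F atTop (nhds L) := by
    intro F m h1 h2
    have ha : Antitone (fun t => F (max t t₁)) := fun a b hab =>
      h1 (mem_Ici.2 (le_max_right _ _)) (mem_Ici.2 (le_max_right _ _)) (max_le_max_right _ hab)
    have hb : BddBelow (range (fun t => F (max t t₁))) := by
      refine ⟨m, ?_⟩
      rintro _ ⟨t, rfl⟩
      exact h2 _ (le_max_right _ _)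
    refine ⟨_, (tendsto_atTop_ciInf ha hb).congr' ?_⟩
    filter_upwards [eventually_ge_atTop t₁] with t ht
    rw [max_eq_left ht]
  have hEanti : AntitoneOn E (Ici t₁) := anti E E' hE (fun t ht => by
    have := hE' t ht
    have := mul_nonneg hκ.le (hh0 t ht)
    linarith)
  obtain ⟨LE, hLE⟩ := conv E 0 hEanti hE0
  have hkI : ∀ s t, t₁ ≤ s → s ≤ t → IntervalIntegrable k volume s t := by
    intro s t hs hst
    rw [intervalIntegrable_iff_integrableOn_Icc_of_le hst]
    exact hk.mono_set (fun u hu => hs.trans hu.1)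
  have hKt := intervalIntegral_tendsto_integral_Ioi (μ := volume) t₁ (hk.mono_set Ioi_subset_Ici_self) tendsto_id
  simp only [id] at hKt
  set K : ℝ → ℝ := fun t => ∫ u in t₁..t, k u with hK
  set F : ℝ → ℝ := fun t => W t + C / κ * E t with hF
  have hFd : ∀ t ≥ t₁, HasDerivAt F (W' t + C / κ * E' t) t := fun t ht =>
    (hW t ht).add ((hE t ht).const_mul _)
  have hFle : ∀ t ≥ t₁, W' t + C / κ * E' t ≤ M * k t := fun t ht => by
    have h1 := hE' t ht
    have h2 := mul_le_mul_of_nonneg_left h1 (div_nonneg hC hκ.le)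
    have h3 : C / κ * -(κ * h t) = - (C * h t) := by field_simp
    linarith [hW' t ht]
  have hGanti : AntitoneOn (fun t => F t - M * K t) (Ici t₁) := by
    intro s hs t ht hst
    have h1 := intervalIntegral.sub_le_integral_of_hasDeriv_right_of_le (g := F) (φ := fun t => M * k t) hst
      (fun u hu => (hFd u (le_trans hs hu.1)).continuousAt.continuousWithinAt)
      (fun u hu => (hFd u (le_trans hs hu.1.le)).hasDerivWithinAt)
      ((hk.mono_set (fun u hu => le_trans hs hu.1)).const_mul M)
      (fun u hu => hFle u (le_trans hs hu.1.le))
    rw [intervalIntegral.integral_const_mul] at h1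
    have h2 := intervalIntegral.integral_add_adjacent_intervals (hkI t₁ s le_rfl hs) (hkI s t hs hst)
    simp only [hK]
    rw [← h2]
    linarith
  have hFbd : ∃ m, ∀ t ≥ t₁, m ≤ F t - M * K t := by
    have hb : ∀ t ≥ t₁, |K t| ≤ ∫ u in Ici t₁, |k u| := by
      intro t ht
      have h1 : |K t| ≤ ∫ u in t₁..t, |k u| := by
        have := intervalIntegral.norm_integral_le_integral_norm (f := k) (μ := volume) ht
        simpa [Real.norm_eq_abs] using this
      refine h1.trans ?_
      rw [intervalIntegral.integral_of_le ht]
      refine setIntegral_mono_set hk.abs (Eventually.of_forall fun u => abs_nonneg _) ?_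
      exact Eventually.of_forall fun u hu => le_of_lt hu.1
    refine ⟨- (|M| * ∫ u in Ici t₁, |k u|), fun t ht => ?_⟩
    have h1 : 0 ≤ F t := by
      have := mul_nonneg (div_nonneg hC hκ.le) (hE0 t ht)
      have := hW0 t ht
      simp only [hF]; linarith
    have h2 : M * K t ≤ |M| * ∫ u in Ici t₁, |k u| := by
      refine (le_abs_self _).trans ?_
      rw [abs_mul]
      exact mul_le_mul_of_nonneg_left (hb t ht) (abs_nonneg _)
    linarith
  obtain ⟨m, hm⟩ := hFbd
  obtain ⟨LG, hLG⟩ := conv _ m hGanti hm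
  obtain ⟨L, hL⟩ : ∃ L, Tendsto W atTop (nhds L) := by
    refine ⟨_, ((hLG.add (hKt.const_mul M)).sub (hLE.const_mul (C / κ))).congr ?_⟩
    intro t
    simp only [hF, hK]; ring
  have hL0 : 0 ≤ L := ge_of_tendsto hL (by
    filter_upwards [eventually_ge_atTop t₁] with t ht using hW0 t ht)
  rcases hL0.eq_or_lt with h0 | h0
  · rwa [h0]
  exfalso
  have hev : ∀ᶠ t in atTop, L / 2 < W t := hL.eventually (lt_mem_nhds (by linarith))
  obtain ⟨T, hT⟩ := eventually_atTop.1 hev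
  set T₁ := max T t₁
  have hlog : AntitoneOn (fun t => E t + κ * (L / 2) * Real.log t) (Ici T₁) := by
    have hd : ∀ t ≥ T₁, HasDerivAt (fun t => E t + κ * (L / 2) * Real.log t) (E' t + κ * (L / 2) * t⁻¹) t := by
      intro t ht
      have h1 : t₁ ≤ t := (le_max_right _ _).trans ht
      exact (hE t h1).add ((Real.hasDerivAt_log (by linarith)).const_mul _)
    refine antitoneOn_of_deriv_nonpos (convex_Ici _) 
      (fun t ht => (hd t ht).continuousAt.continuousWithinAt) 
      (fun t ht => (hd t (interior_subset ht)).differentiableAt.differentiableWithinAt) ?_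
    intro t ht
    have ht' : T₁ ≤ t := interior_subset ht
    have h1 : t₁ ≤ t := (le_max_right _ _).trans ht'
    rw [(hd t ht').deriv]
    have h2 := hT t ((le_max_left _ _).trans ht')
    have h3 := hWh t h1
    have htp : 0 < t := by linarith
    have h4 : L / 2 * t⁻¹ ≤ h t := by
      rw [← div_eq_mul_inv, div_le_iff₀ htp]; linarith
    have := mul_le_mul_of_nonneg_left h4 hκ.le
    linarith [hE' t h1]
  have hlim : Tendsto (fun t => κ * (L / 2) * Real.log t) atTop atTop :=
    Real.tendsto_log_atTop.const_mul_atTop (by positivity)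
  obtain ⟨t, ht1, ht2⟩ := ((hlim.eventually_gt_atTop (E T₁ + κ * (L / 2) * Real.log T₁)).and 
    (eventually_ge_atTop T₁)).exists
  have h1 := hlog (mem_Ici.2 le_rfl) (mem_Ici.2 ht2) ht2
  have h2 := hE0 t ((le_max_right _ _).trans ht2)
  simp only at h1
  linarith

theorem aux_inner {H : Type*} [NormedAddCommGroup H] [InnerProductSpace ℝ H]
    (y v g : H) (c t β d e : ℝ) :
    inner ℝ (c • y + t • (v + β • g)) (d • v - e • g) =
      c * d * inner ℝ y v - c * e * inner ℝ g y + t * d * ‖v‖ ^ 2 - t * e * inner ℝ g v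
      + t * β * d * inner ℝ g v - t * β * e * ‖g‖ ^ 2 := by
  simp only [inner_add_left, inner_sub_right, inner_smul_left, inner_smul_right, conj_trivial,
    real_inner_self_eq_norm_sq]
  rw [real_inner_comm g y, real_inner_comm g v]
  ring

theorem aux_E {H : Type*} [NormedAddCommGroup H] [InnerProductSpace ℝ H]
    (z : H) (t α ε : ℝ) (ht : 0 < t)
    (β w φ : ℝ → ℝ) (x v g : ℝ → H) (βd wd lamd bt : ℝ) (acc G' : H)
    (hε : 0 < ε)
    (hβ : HasDerivAt β βd t) (hw : HasDerivAt w wd t)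
    (hx : HasDerivAt x (v t) t) (hv : HasDerivAt v acc t) (hg : HasDerivAt g G' t)
    (hφ : HasDerivAt φ (inner ℝ (g t) (v t) - lamd / 2 * ‖g t‖ ^ 2) t)
    (hode : acc + (α / t) • v t + β t • G' + bt • g t = 0)
    (hwt : w t = bt - βd - β t / t) (hw0 : 0 < w t) (hβ0 : 0 ≤ β t) (hlamd : 0 ≤ lamd)
    (hφ0 : 0 ≤ φ t) (hφg : φ t ≤ inner ℝ (g t) (x t - z)) (hεα : ε < α - 1)
    (hA : ε * bt ≤ (α - 3) * w t - t * wd) :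
    ∃ e, HasDerivAt (fun s => (s ^ 2 * w s + ε / 2 * (s * β s)) * φ s
      + 1 / 2 * ‖(α - 1 - ε / 2) • (x s - z) + s • (v s + β s • g s)‖ ^ 2
      + 1 / 2 * ((α - 1 - ε / 2) * (ε / 2)) * ‖x s - z‖ ^ 2) e t ∧
      e ≤ - (ε / 2 * (t * ‖v t‖ ^ 2 + t * bt * φ t)) := by
  set c := α - 1 - ε / 2 with hc
  have hc0 : 0 < c := by linarith
  have hη : HasDerivAt (fun s => c • (x s - z) + s • (v s + β s • g s))
      ((- (ε / 2)) • v t - (t * w t) • g t) t := by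
    have h1 := ((hx.sub_const z).const_smul c).add ((hasDerivAt_id t).smul (hv.add (hβ.smul hg)))
    refine h1.congr_deriv ?_
    have hacc : acc = - ((α / t) • v t + β t • G' + bt • g t) := by
      rw [← sub_eq_zero]; rw [← hode]; abel
    simp only [id, Pi.add_apply, Pi.smul_apply']
    rw [hacc, hwt, hc]
    match_scalars <;> field_simp <;> ring
  have hδ : HasDerivAt (fun s => s ^ 2 * w s + ε / 2 * (s * β s))
      (2 * t * w t + t ^ 2 * wd + ε / 2 * (β t + t * βd)) t := by
    have h1 := (((hasDerivAt_id t).pow 2).mul hw).add ((((hasDerivAt_id t).mul hβ)).const_mul (ε / 2))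
    refine h1.congr_deriv ?_
    simp
  have hE := ((hδ.mul hφ).add (hη.norm_sq.const_mul (1 / 2))).add
    ((hx.sub_const z).norm_sq.const_mul (1 / 2 * (c * (ε / 2))))
  refine ⟨_, hE, ?_⟩
  rw [aux_inner]
  have hβd : β t + t * βd = t * (bt - w t) := by rw [hwt]; field_simp; ring
  rw [hβd]
  have h1 : c * (t * w t) * φ t ≤ c * (t * w t) * inner ℝ (g t) (x t - z) :=
    mul_le_mul_of_nonneg_left hφg (by positivity)
  have h2 : 0 ≤ (t ^ 2 * w t + ε / 2 * (t * β t)) * (lamd / 2 * ‖g t‖ ^ 2) := by positivity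
  have h3 : 0 ≤ t * β t * (t * w t) * ‖g t‖ ^ 2 := by positivity
  have h4 := mul_le_mul_of_nonneg_left hA (mul_nonneg ht.le hφ0)
  rw [hc] at h1 ⊢
  linarith

theorem aux_W {H : Type*} [NormedAddCommGroup H] [InnerProductSpace ℝ H]
    (t α C M : ℝ) (ht : 0 < t)
    (b φ : ℝ → ℝ) (v : ℝ → H) (bd lam lamd β : ℝ) (acc G' g : H)
    (hα : 1 < α) (hlam : 0 < lam)
    (hb : HasDerivAt b bd t) (hv : HasDerivAt v acc t)
    (hφ : HasDerivAt φ (inner ℝ g (v t) - lamd / 2 * ‖g‖ ^ 2) t)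
    (hode : acc + (α / t) • v t + β • G' + b t • g = 0)
    (hβ0 : 0 ≤ β) (hlamd : 0 ≤ lamd) (hφ0 : 0 ≤ φ t) (hb0 : 0 < b t)
    (hmono : 0 ≤ inner ℝ G' (v t - lamd • g - lam • G'))
    (hgM : lam * ‖g‖ ≤ M) (hC : 0 < C)
    (hA : 2 * t * b t + t ^ 2 * bd ≤ C * (t * b t)) :
    ∃ e, HasDerivAt (fun s => 1 / 2 * (s ^ 2 * ‖v s‖ ^ 2) + s ^ 2 * b s * φ s) e t ∧
      e ≤ (C + 1) * (t * ‖v t‖ ^ 2 + t * b t * φ t) +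
        M ^ 2 * max (lamd ^ 2 * t ^ 3 * β ^ 2 / lam ^ 4 - lamd * t ^ 2 * b t / (2 * lam ^ 2)) 0 := by
  have hsq : HasDerivAt (fun s : ℝ => s ^ 2) (2 * t) t := by
    simpa using hasDerivAt_pow 2 t
  have hW := ((hsq.mul hv.norm_sq).const_mul (1 / 2)).add ((hsq.mul hb).mul hφ)
  refine ⟨_, hW, ?_⟩
  simp only [Pi.mul_apply]
  have hacc : acc = - ((α / t) • v t + β • G' + b t • g) := by
    rw [← sub_eq_zero]; rw [← hode]; abel
  have h1 : inner ℝ (v t) acc = - (α / t * ‖v t‖ ^ 2 + β * inner ℝ G' (v t) + b t * inner ℝ g (v t)) := by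
    rw [hacc, inner_neg_right, inner_add_right, inner_add_right, inner_smul_right, inner_smul_right,
      inner_smul_right, real_inner_self_eq_norm_sq, real_inner_comm G' (v t), real_inner_comm g (v t)]
  rw [h1]
  have hcross : - inner ℝ G' (v t) ≤ lamd / lam * ‖g‖ * ‖v t‖ := by
    rw [inner_sub_right, inner_sub_right, inner_smul_right, inner_smul_right,
      real_inner_self_eq_norm_sq] at hmono
    by_cases hcase : lam * ‖G'‖ ≤ lamd * ‖g‖
    · have h2 : ‖G'‖ ≤ lamd / lam * ‖g‖ := by
        rw [div_mul_eq_mul_div, le_div_iff₀ hlam]; linarith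
      have h3 := abs_real_inner_le_norm G' (v t)
      have h4 := neg_abs_le (inner ℝ G' (v t))
      have h5 := mul_le_mul_of_nonneg_right h2 (norm_nonneg (v t))
      linarith
    · push Not at hcase
      have h3 := abs_real_inner_le_norm G' g
      have h4 := neg_abs_le (inner ℝ G' g)
      have h5 : lamd * -(‖G'‖ * ‖g‖) ≤ lamd * inner ℝ G' g :=
        mul_le_mul_of_nonneg_left (by linarith) hlamd
      have h6 := mul_le_mul_of_nonneg_left hcase.le (norm_nonneg G')
      have h7 : 0 ≤ lamd / lam * ‖g‖ * ‖v t‖ := by positivity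
      nlinarith
  set q := lam * ‖g‖ with hq
  have hq0 : 0 ≤ q := by positivity
  have hgq : ‖g‖ = q / lam := by rw [hq]; field_simp
  set A := lamd ^ 2 * t ^ 3 * β ^ 2 / lam ^ 4 - lamd * t ^ 2 * b t / (2 * lam ^ 2) with hAdef
  have hAm : q ^ 2 * A ≤ M ^ 2 * max A 0 := by
    calc q ^ 2 * A ≤ q ^ 2 * max A 0 := mul_le_mul_of_nonneg_left (le_max_left _ _) (by positivity)
      _ ≤ M ^ 2 * max A 0 := mul_le_mul_of_nonneg_right (pow_le_pow_left₀ hq0 hgM 2) (le_max_right _ _)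
  have hyoung : t ^ 2 * β * (lamd / lam * ‖g‖ * ‖v t‖) ≤
      lamd ^ 2 * t ^ 3 * β ^ 2 / lam ^ 4 * q ^ 2 + 1 / 4 * (t * ‖v t‖ ^ 2) := by
    rw [hgq]
    have h8 : 0 ≤ t * (t * β * lamd / lam ^ 2 * q - 1 / 2 * ‖v t‖) ^ 2 := by positivity
    have h9 : t * (t * β * lamd / lam ^ 2 * q - 1 / 2 * ‖v t‖) ^ 2 =
      lamd ^ 2 * t ^ 3 * β ^ 2 / lam ^ 4 * q ^ 2 + 1 / 4 * (t * ‖v t‖ ^ 2)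
        - t ^ 2 * β * (lamd / lam * (q / lam) * ‖v t‖) := by
      field_simp; ring
    linarith
  have hc2 : t ^ 2 * β * (- inner ℝ G' (v t)) ≤ t ^ 2 * β * (lamd / lam * ‖g‖ * ‖v t‖) :=
    mul_le_mul_of_nonneg_left hcross (by positivity)
  have hbterm : t ^ 2 * b t * (lamd / 2 * ‖g‖ ^ 2) = q ^ 2 * (lamd * t ^ 2 * b t / (2 * lam ^ 2)) := by
    rw [hgq]; field_simp
  have hαt : t ^ 2 * (α / t * ‖v t‖ ^ 2) = α * (t * ‖v t‖ ^ 2) := by field_simp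
  have h10 := mul_le_mul_of_nonneg_right hA hφ0
  have h11 : 0 ≤ t * b t * φ t := by positivity
  have h12 : 0 ≤ t * ‖v t‖ ^ 2 := by positivity
  have h13 : 0 ≤ (α - 1) * (t * ‖v t‖ ^ 2) := mul_nonneg (by linarith) h12
  have h14 : 0 ≤ C * (t * ‖v t‖ ^ 2) := by positivity
  have h15 : q ^ 2 * A = lamd ^ 2 * t ^ 3 * β ^ 2 / lam ^ 4 * q ^ 2
     - q ^ 2 * (lamd * t ^ 2 * b t / (2 * lam ^ 2)) := by rw [hAdef]; ring
  linarith

theorem velocity_little_o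
    {H : Type*} [NormedAddCommGroup H] [InnerProductSpace ℝ H] [CompleteSpace H]
    (Φ : H → EReal)
    (hΦbot : ∀ y, Φ y ≠ ⊥) (hΦproper : ∃ y, Φ y ≠ ⊤)
    (hΦconv : EConvexOn Φ) (hΦlsc : LowerSemicontinuous Φ)
    (t₀ α : ℝ) (ht₀ : 0 < t₀)
    (β b lam β' b' lam' w' : ℝ → ℝ)
    (hβnonneg : ∀ t ≥ t₀, 0 ≤ β t)
    (hbpos : ∀ t ≥ t₀, 0 < b t)
    (hlampos : ∀ t ≥ t₀, 0 < lam t)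
    (hβ' : ∀ t ≥ t₀, HasDerivAt β (β' t) t)
    (hb' : ∀ t ≥ t₀, HasDerivAt b (b' t) t)
    (hlam' : ∀ t ≥ t₀, HasDerivAt lam (lam' t) t)
    (hw' : ∀ t ≥ t₀, HasDerivAt (fun s => b s - β' s - β s / s) (w' t) t)
    (x v acc p G' : ℝ → H)
    (hx : ∀ t ≥ t₀, HasDerivAt x (v t) t)
    (hv : ∀ t ≥ t₀, HasDerivAt v (acc t) t)
    (hp : ∀ t ≥ t₀, IsProxPt Φ (lam t) (x t) (p t))
    (hG' : ∀ t ≥ t₀, HasDerivAt (fun s => (lam s)⁻¹ • (x s - p s)) (G' t) t)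
    (hode : ∀ t ≥ t₀, acc t + (α / t) • v t + β t • G' t
        + b t • ((lam t)⁻¹ • (x t - p t)) = 0)
    (hα : 1 < α)
    (hlammono : MonotoneOn lam (Set.Ici t₀))
    (hβmono : MonotoneOn β (Set.Ici t₀))
    (hw : ∀ t ≥ t₀, β' t + β t / t < b t)
    (hAs2 : ∃ ε, 0 < ε ∧ ε < α - 1 ∧
      ∀ t ≥ t₀, ε * b t ≤ (α - 3) * (b t - β' t - β t / t) - t * w' t)
    (hAs4 : ∫⁻ t in Set.Ici t₀, ENNReal.ofReal ((lam' t) ^ 2 * t ^ 3 * (β t) ^ 2 / (lam t) ^ 4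
      - lam' t * t ^ 2 * b t / (2 * (lam t) ^ 2)) < ⊤)
    (hAs : ∃ C > (0 : ℝ), ∀ t ≥ t₀, 2 * t * b t + t ^ 2 * b' t ≤ C * (t * b t))
    (hargmin : ∃ z, ∀ y, Φ z ≤ Φ y)
    :
    Filter.Tendsto (fun t => t * ‖v t‖) Filter.atTop (nhds 0) := by
  obtain ⟨ε, hε, hεα, hA2⟩ := hAs2
  obtain ⟨C, hC, hA1⟩ := hAs
  obtain ⟨z, hz⟩ := hargmin
  obtain ⟨y0, hy0⟩ := hΦproper
  have hzt : Φ z ≠ ⊤ := fun h => hy0 (top_le_iff.1 (h ▸ hz y0))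
  set g : ℝ → H := fun s => (lam s)⁻¹ • (x s - p s) with hgdef
  set f : ℝ → ℝ := fun s => (Φ (p s)).toReal with hfdef
  set f0 : ℝ := (Φ z).toReal with hf0
  set w : ℝ → ℝ := fun s => b s - β' s - β s / s with hwdef
  set φ : ℝ → ℝ := fun s => f s - f0 + lam s / 2 * ‖g s‖ ^ 2 with hφdef
  have hpt : ∀ t ≥ t₀, Φ (p t) ≠ ⊤ := fun t ht => aux_prox_ne_top Φ _ _ _ z (hp t ht) hzt
  have hS1 : ∀ s ≥ t₀, ∀ t ≥ t₀, f t + inner ℝ (g t) (p s - p t) ≤ f s := fun s hs t ht =>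
    aux_subgrad Φ hΦbot hΦconv _ (hlampos t ht) _ _ _ (hp t ht) (hpt s hs)
  have hS2 : ∀ t ≥ t₀, f t + inner ℝ (g t) (z - p t) ≤ f0 := fun t ht =>
    aux_subgrad Φ hΦbot hΦconv _ (hlampos t ht) _ _ _ (hp t ht) hzt
  have hS3 : ∀ t ≥ t₀, f0 ≤ f t := fun t ht =>
    EReal.toReal_le_toReal (hz _) (hΦbot z) (hpt t ht)
  have hpg : ∀ t ≥ t₀, x t - p t = lam t • g t := fun t ht => by
    rw [hgdef]; simp only
    rw [smul_smul, mul_inv_cancel₀ (hlampos t ht).ne', one_smul]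
  have hφ0 : ∀ t ≥ t₀, 0 ≤ φ t := fun t ht => by
    have h1 := hS3 t ht
    have h2 := (hlampos t ht)
    have h3 : 0 ≤ lam t / 2 * ‖g t‖ ^ 2 := by positivity
    simp only [hφdef]; linarith
  have hgz : ∀ t ≥ t₀, f t - f0 + lam t * ‖g t‖ ^ 2 ≤ inner ℝ (g t) (x t - z) := fun t ht => by
    have h1 := hS2 t ht
    have h2 : x t - z = lam t • g t - (z - p t) := by rw [← hpg t ht]; abel
    rw [h2, inner_sub_right, inner_smul_right, real_inner_self_eq_norm_sq]
    linarith
  have hφg : ∀ t ≥ t₀, φ t ≤ inner ℝ (g t) (x t - z) := fun t ht => by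
    have h1 := hgz t ht
    have h2 := (hlampos t ht)
    have h3 : 0 ≤ lam t / 2 * ‖g t‖ ^ 2 := by positivity
    simp only [hφdef]; linarith
  have hgx : ∀ t ≥ t₀, lam t * ‖g t‖ ≤ ‖x t - z‖ := fun t ht => by
    have h1 := hgz t ht
    have h2 := hS3 t ht
    have h3 := real_inner_le_norm (g t) (x t - z)
    rcases (norm_nonneg (g t)).eq_or_lt with h0 | h0
    · rw [← h0, mul_zero]; exact norm_nonneg _
    · refine le_of_mul_le_mul_left ?_ h0
      nlinarith
  have hp' : ∀ t > t₀, HasDerivAt p (v t - lam' t • g t - lam t • G' t) t := fun t ht => by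
    have h1 := (hx t ht.le).sub ((hlam' t ht.le).smul (hG' t ht.le))
    have h2 : HasDerivAt p (v t - (lam t • G' t + lam' t • g t)) t := by
      refine h1.congr_of_eventuallyEq ?_
      filter_upwards [lt_mem_nhds ht] with s hs
      have := hpg s hs.le
      simp only [Pi.sub_apply, Pi.smul_apply']
      rw [← sub_eq_zero, sub_eq_iff_eq_add] at this
      change p s = x s - lam s • g s
      rw [← hpg s hs.le]; abel
    refine h2.congr_deriv ?_
    abel
  have hmono : ∀ t > t₀, 0 ≤ inner ℝ (G' t) (v t - lam' t • g t - lam t • G' t) := fun t ht => by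
    refine aux_mono g p t _ _ (hG' t ht.le) (hp' t ht) ?_
    filter_upwards [lt_mem_nhds ht] with s hs
    have h1 := hS1 s hs.le t ht.le
    have h2 := hS1 t ht.le s hs.le
    have h3 : inner ℝ (g s) (p t - p s) = - inner ℝ (g s) (p s - p t) := by
      rw [← inner_neg_right, neg_sub]
    rw [inner_sub_left]
    linarith
  have hφ' : ∀ t > t₀, HasDerivAt φ (inner ℝ (g t) (v t) - lam' t / 2 * ‖g t‖ ^ 2) t := fun t ht => by
    have h1 := aux_fderiv f g p t _ _ (hG' t ht.le) (hp' t ht) (by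
      filter_upwards [lt_mem_nhds ht] with s hs
      exact ⟨hS1 s hs.le t ht.le, hS1 t ht.le s hs.le⟩)
    have h2 := (h1.sub_const f0).add (((hlam' t ht.le).div_const 2).mul (hG' t ht.le).norm_sq)
    refine h2.congr_deriv ?_
    rw [inner_sub_right, inner_sub_right, inner_smul_right _ (g t), inner_smul_right _ (G' t),
      real_inner_self_eq_norm_sq]
    change inner ℝ (g t) (v t) - lam' t * ‖g t‖ ^ 2 - lam t * inner ℝ (g t) (G' t) +
      (lam' t / 2 * ‖g t‖ ^ 2 + lam t / 2 * (2 * inner ℝ (g t) (G' t))) = _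
    ring
  have hlam0 : ∀ t > t₀, 0 ≤ lam' t := fun t ht => by
    have h1 := (hlam' t ht.le).hasDerivWithinAt (s := Ici t₀)
    have h2 : UniqueDiffWithinAt ℝ (Ici t₀) t := uniqueDiffOn_Ici t₀ t ht.le
    rw [← h1.derivWithin h2]
    exact hlammono.derivWithin_nonneg
  have hw0 : ∀ t ≥ t₀, 0 < w t := fun t ht => by
    have := hw t ht
    simp only [hwdef]; linarith
  set t₁ := t₀ + 1 with ht₁
  have hgt : ∀ t ≥ t₁, t₀ < t := fun t ht => by linarith
  have hpos : ∀ t ≥ t₁, 0 < t := fun t ht => by linarith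
  set h : ℝ → ℝ := fun t => t * ‖v t‖ ^ 2 + t * b t * φ t with hh
  set E : ℝ → ℝ := fun s => (s ^ 2 * w s + ε / 2 * (s * β s)) * φ s
      + 1 / 2 * ‖(α - 1 - ε / 2) • (x s - z) + s • (v s + β s • g s)‖ ^ 2
      + 1 / 2 * ((α - 1 - ε / 2) * (ε / 2)) * ‖x s - z‖ ^ 2 with hEdef
  have hEx : ∀ t, ∃ e, t ≥ t₁ → HasDerivAt E e t ∧ e ≤ - (ε / 2 * h t) := by
    intro t
    by_cases ht : t ≥ t₁
    · have h0 := hgt t ht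
      obtain ⟨e, he⟩ := aux_E z t α ε (hpos t ht) β w φ x v g (β' t) (w' t) (lam' t) (b t) (acc t) (G' t)
        hε (hβ' t h0.le) (hw' t h0.le) (hx t h0.le) (hv t h0.le) (hG' t h0.le) (hφ' t h0) (hode t h0.le)
        rfl (hw0 t h0.le) (hβnonneg t h0.le) (hlam0 t h0) (hφ0 t h0.le) (hφg t h0.le) hεα (hA2 t h0.le)
      exact ⟨e, fun _ => he⟩
    · exact ⟨0, fun h => absurd h ht⟩
  choose E' hE' using hEx
  have hc0 : 0 < (α - 1 - ε / 2) * (ε / 2) := mul_pos (by linarith) (by linarith)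
  have hEge : ∀ t ≥ t₁, 1 / 2 * ((α - 1 - ε / 2) * (ε / 2)) * ‖x t - z‖ ^ 2 ≤ E t := fun t ht => by
    have h0 := hgt t ht
    have h1 := hw0 t h0.le
    have h2 := hβnonneg t h0.le
    have h3 := hφ0 t h0.le
    have h4 := hpos t ht
    have h5 : 0 ≤ (t ^ 2 * w t + ε / 2 * (t * β t)) * φ t := by positivity
    have h6 : 0 ≤ 1 / 2 * ‖(α - 1 - ε / 2) • (x t - z) + t • (v t + β t • g t)‖ ^ 2 := by positivity
    simp only [hEdef]; linarith
  have hE0 : ∀ t ≥ t₁, 0 ≤ E t := fun t ht => le_trans (by positivity) (hEge t ht)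
  have hh0 : ∀ t ≥ t₁, 0 ≤ h t := fun t ht => by
    have h0 := hgt t ht
    have h2 := hbpos t h0.le
    have h3 := hφ0 t h0.le
    have h4 := hpos t ht
    simp only [hh]; positivity
  have hEanti : AntitoneOn E (Ici t₁) := by
    refine antitoneOn_of_deriv_nonpos (convex_Ici _)
      (fun t ht => (hE' t ht).1.continuousAt.continuousWithinAt)
      (fun t ht => (hE' t (interior_subset ht)).1.differentiableAt.differentiableWithinAt) ?_
    intro t ht
    have ht' : t ≥ t₁ := interior_subset ht
    rw [(hE' t ht').1.deriv]
    have h1 := (hE' t ht').2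
    have h2 := mul_nonneg (half_pos hε).le (hh0 t ht')
    linarith
  obtain ⟨M, hM⟩ : ∃ M, ∀ t ≥ t₁, ‖x t - z‖ ≤ M := by
    refine ⟨Real.sqrt (E t₁ / (1 / 2 * ((α - 1 - ε / 2) * (ε / 2)))), fun t ht => ?_⟩
    refine Real.le_sqrt_of_sq_le ?_
    rw [le_div_iff₀ (by positivity)]
    have h1 := hEge t ht
    have h2 := hEanti (mem_Ici.2 le_rfl) (mem_Ici.2 ht) ht
    linarith
  set W : ℝ → ℝ := fun s => 1 / 2 * (s ^ 2 * ‖v s‖ ^ 2) + s ^ 2 * b s * φ s with hWdef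
  set k : ℝ → ℝ := fun t => max ((lam' t) ^ 2 * t ^ 3 * (β t) ^ 2 / (lam t) ^ 4
      - lam' t * t ^ 2 * b t / (2 * (lam t) ^ 2)) 0 with hk
  have hWx : ∀ t, ∃ e, t ≥ t₁ → HasDerivAt W e t ∧ e ≤ (C + 1) * h t + M ^ 2 * k t := by
    intro t
    by_cases ht : t ≥ t₁
    · have h0 := hgt t ht
      obtain ⟨e, he⟩ := aux_W t α C M (hpos t ht) b φ v (b' t) (lam t) (lam' t) (β t) (acc t) (G' t) (g t)
        hα (hlampos t h0.le) (hb' t h0.le) (hv t h0.le) (hφ' t h0) (hode t h0.le)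
        (hβnonneg t h0.le) (hlam0 t h0) (hφ0 t h0.le) (hbpos t h0.le) (hmono t h0)
        ((hgx t h0.le).trans (hM t ht)) hC (hA1 t h0.le)
      exact ⟨e, fun _ => he⟩
    · exact ⟨0, fun h => absurd h ht⟩
  choose W' hW' using hWx
  have hkint : IntegrableOn k (Ici t₁) := by
    have hsub : IntegrableOn k (Ici t₀) := by
      have hlm : AEMeasurable lam' (volume.restrict (Ici t₀)) := by
        refine (measurable_deriv lam).aemeasurable.congr ?_
        filter_upwards [ae_restrict_mem measurableSet_Ici] with t ht
        exact (hlam' t ht).deriv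
      have hcm : ∀ u u' : ℝ → ℝ, (∀ t ≥ t₀, HasDerivAt u (u' t) t) →
          AEMeasurable u (volume.restrict (Ici t₀)) := fun u u' hu =>
        ContinuousOn.aemeasurable (fun t ht => (hu t ht).continuousAt.continuousWithinAt) measurableSet_Ici
      have hβm := hcm _ _ hβ'
      have hbm := hcm _ _ hb'
      have hlamm := hcm _ _ hlam'
      have hkm : AEMeasurable k (volume.restrict (Ici t₀)) := by
        simp only [hk]
        fun_prop
      refine ⟨hkm.aestronglyMeasurable, ?_⟩
      rw [hasFiniteIntegral_iff_ofReal (f := k) (Eventually.of_forall fun t => le_max_right _ _)]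
      refine lt_of_eq_of_lt ?_ hAs4
      refine lintegral_congr fun t => ?_
      simp only [hk, ENNReal.ofReal_max, ENNReal.ofReal_zero]
      exact max_eq_left bot_le
    exact hsub.mono_set (Ici_subset_Ici.2 (by linarith))
  have hWlim : Tendsto W atTop (nhds 0) := by
    refine aux_scalar t₁ (ε / 2) (C + 1) (M ^ 2) (by linarith) (half_pos hε) (by linarith) E W h k E' W'
      (fun t ht => (hE' t ht).1) (fun t ht => (hW' t ht).1) hE0 ?_
      (fun t ht => (hE' t ht).2) (fun t ht => (hW' t ht).2) ?_ hkint
    · intro t ht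
      have h0 := hgt t ht
      have h2 := hbpos t h0.le
      have h3 := hφ0 t h0.le
      simp only [hWdef]; positivity
    · intro t ht
      have h4 : 0 ≤ t ^ 2 * ‖v t‖ ^ 2 := by positivity
      simp only [hWdef, hh]
      linarith
  have hsq : Tendsto (fun t => Real.sqrt (2 * W t)) atTop (nhds 0) := by
    have := (hWlim.const_mul 2).sqrt
    simpa using this
  refine squeeze_zero' ?_ ?_ hsq
  · filter_upwards [eventually_ge_atTop t₁] with t ht
    exact mul_nonneg (hpos t ht).le (norm_nonneg _)
  · filter_upwards [eventually_ge_atTop t₁] with t ht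
    refine Real.le_sqrt_of_sq_le ?_
    have h0 := hgt t ht
    have h2 := hbpos t h0.le
    have h3 := hφ0 t h0.le
    have h4 : 0 ≤ t ^ 2 * b t * φ t := by positivity
    simp only [hWdef]
    rw [mul_pow]
    linarith
end
end

section
/- Assume α > 1, both λ and β are nondecreasing on [t₀,∞), b(t) > β'(t) + β(t)/t (equivalently w(t) > 0) for every t ≥ t₀, there exists ε ∈ (0, α−1) with (α−3)·w(t) − t·w'(t) ≥ ε·b(t) for every t ≥ t₀, ∫_{t₀}^{∞} [ λ'(t)²·t³·β(t)²/λ(t)⁴ − λ'(t)·t²·b(t)/(2·λ(t)²) ]_+ dt < +∞ (where [·]_+ denotes the positive part), and there exists C > 0 with (d/dt)(t²·b(t)) ≤ C·t·b(t) for every t ≥ t₀. Then (t·√(b(t))/√(λ(t)))·‖prox_{λ(t)Φ}(x(t)) − x(t)‖ → 0 as t → +∞, i.e. ‖prox_{λ(t)Φ}(x(t)) − x(t)‖ = o(√(λ(t))/(t·√(b(t)))). -/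
open Set MeasureTheory Filter Real

noncomputable section

theorem aux_prox {H : Type*} [NormedAddCommGroup H] [InnerProductSpace ℝ H]
    (l f r : ℝ) (hl : 0 < l) (x p y : H)
    (h : ∀ a : ℝ, 0 < a → a ≤ 1 → f + ‖x - p‖ ^ 2 / (2 * l) ≤
      (1 - a) * f + a * r + ‖x - ((1 - a) • p + a • y)‖ ^ 2 / (2 * l)) :
    f + inner ℝ (l⁻¹ • (x - p)) (y - p) ≤ r := by
  have key : ∀ a : ℝ, 0 < a → a ≤ 1 →
      f + inner ℝ (l⁻¹ • (x - p)) (y - p) - r ≤ a * (‖y - p‖ ^ 2 / (2 * l)) := by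
    intro a ha ha1
    have h1 := h a ha ha1
    have e : x - ((1 - a) • p + a • y) = (x - p) - a • (y - p) := by module
    rw [e, norm_sub_sq_real (x - p), inner_smul_right, norm_smul, Real.norm_of_nonneg ha.le] at h1
    rw [inner_smul_left]
    simp only [conj_trivial]
    have h2 : a * (f + l⁻¹ * inner ℝ (x - p) (y - p) - r) ≤ a * (a * (‖y - p‖ ^ 2 / (2 * l))) := by
      have : (‖x - p‖ ^ 2 - 2 * (a * inner ℝ (x - p) (y - p)) + (a * ‖y - p‖) ^ 2) / (2 * l)
        = ‖x - p‖ ^ 2 / (2 * l) - a * (l⁻¹ * inner ℝ (x - p) (y - p))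
          + a * (a * (‖y - p‖ ^ 2 / (2 * l))) := by
        field_simp
      rw [this] at h1
      linarith
    exact le_of_mul_le_mul_left h2 ha
  have hlim : Tendsto (fun a : ℝ => a * (‖y - p‖ ^ 2 / (2 * l))) (nhdsWithin 0 (Ioi 0)) (nhds 0) := by
    have : Tendsto (fun a : ℝ => a * (‖y - p‖ ^ 2 / (2 * l))) (nhds 0)
        (nhds (0 * (‖y - p‖ ^ 2 / (2 * l)))) := by
      apply Continuous.tendsto; fun_prop
    rw [zero_mul] at this
    exact this.mono_left nhdsWithin_le_nhds
  have := ge_of_tendsto hlim (by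
    filter_upwards [Ioc_mem_nhdsGT (show (0:ℝ) < 1 by norm_num)] with a ha
    exact key a ha.1 ha.2)
  linarith

theorem aux_ev {s t₀ : ℝ} (hs : t₀ < s) : ∀ᶠ u in nhds s, t₀ < u := Ioi_mem_nhds hs

/-- derivative along a curve of a function with subgradients. -/
theorem aux_deriv {H : Type*} [NormedAddCommGroup H] [InnerProductSpace ℝ H]
    (f : ℝ → ℝ) (G p : ℝ → H) (t₀ s : ℝ) (hs : t₀ < s) (p' G' : H)
    (hp : HasDerivAt p p' s) (hG : HasDerivAt G G' s)
    (hsub : ∀ s > t₀, ∀ u > t₀, f s + inner ℝ (G s) (p u - p s) ≤ f u) :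
    HasDerivAt f (inner ℝ (G s) p') s := by
  have h1 : HasDerivAt (fun u => f u - f s - inner ℝ (G s) (p u - p s)) 0 s := by
    rw [hasDerivAt_iff_isLittleO]
    have hGo : (fun u => G u - G s) =o[nhds s] (fun _ => (1:ℝ)) := by
      rw [Asymptotics.isLittleO_one_iff]
      have := hG.continuousAt.tendsto.sub_const (G s)
      simpa using this
    have hpO : (fun u => p u - p s) =O[nhds s] (fun u => u - s) := hp.isBigO_sub
    have := hGo.norm_left.mul_isBigO hpO.norm_left
    refine Asymptotics.IsBigO.trans_isLittleO ?_ (this.congr_right (fun u => one_mul _))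
    apply Asymptotics.IsBigO.of_bound 1
    filter_upwards [aux_ev hs] with u hu
    have a1 := hsub s hs u hu
    have a2 := hsub u hu s hs
    have a3 : inner ℝ (G u) (p s - p u) = - inner ℝ (G u) (p u - p s) := by
      rw [← inner_neg_right, neg_sub]
    have a4 : inner ℝ (G u - G s) (p u - p s) = inner ℝ (G u) (p u - p s) - inner ℝ (G s) (p u - p s) :=
      inner_sub_left _ _ _
    have a5 := real_inner_le_norm (G u - G s) (p u - p s)
    simp only [sub_self, inner_zero_right, smul_zero, sub_zero, one_mul]
    rw [Real.norm_of_nonneg (by linarith), Real.norm_of_nonneg (by positivity)]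
    linarith
  have h2 : HasDerivAt (fun u => inner ℝ (G s) (p u - p s)) (inner ℝ (G s) p') s := by
    have := (hasDerivAt_const s (G s)).inner ℝ (hp.sub_const (p s))
    simpa using this
  have h3 := (h1.add h2).add_const (f s)
  simp only [zero_add] at h3
  refine h3.congr_of_eventuallyEq (Eventually.of_forall fun u => ?_)
  simp

theorem aux_mono_s13 {H : Type*} [NormedAddCommGroup H] [InnerProductSpace ℝ H]
    (f : ℝ → ℝ) (G p : ℝ → H) (t₀ s : ℝ) (hs : t₀ < s) (p' G' : H)
    (hp : HasDerivAt p p' s) (hG : HasDerivAt G G' s)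
    (hsub : ∀ s > t₀, ∀ u > t₀, f s + inner ℝ (G s) (p u - p s) ≤ f u) :
    0 ≤ inner ℝ G' p' := by
  have h := (hasDerivAt_iff_tendsto_slope.1 hG).inner (𝕜 := ℝ) (hasDerivAt_iff_tendsto_slope.1 hp)
  refine ge_of_tendsto h ?_
  filter_upwards [nhdsWithin_le_nhds (aux_ev hs)] with u hu
  have a1 := hsub s hs u hu
  have a2 := hsub u hu s hs
  have a3 : inner ℝ (G u) (p s - p u) = - inner ℝ (G u) (p u - p s) := by
    rw [← inner_neg_right, neg_sub]
  have a4 : inner ℝ (G u - G s) (p u - p s) = inner ℝ (G u) (p u - p s) - inner ℝ (G s) (p u - p s) :=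
    inner_sub_left _ _ _
  simp only [slope_def_module, inner_smul_left, inner_smul_right, conj_trivial]
  rw [← mul_assoc]
  exact mul_nonneg (mul_self_nonneg _) (by linarith)

theorem aux_Gv {H : Type*} [NormedAddCommGroup H] [InnerProductSpace ℝ H]
    (l l' : ℝ) (hl : 0 < l) (hl' : 0 ≤ l') (v G g p' : H) (hv : v = p' + (l • g + l' • G))
    (h : 0 ≤ inner ℝ g p') : -(l' / l * (‖v‖ * ‖G‖)) ≤ inner ℝ g v := by
  obtain ⟨m, hm⟩ : ∃ m, m = v - l' • G := ⟨_, rfl⟩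
  have hp' : p' = m - l • g := by rw [hm, hv]; module
  have h1 : l * ‖g‖ ^ 2 ≤ inner ℝ g m := by
    rw [hp', inner_sub_right, inner_smul_right, real_inner_self_eq_norm_sq] at h; linarith
  have h2 : ‖(2 * l) • g - m‖ ≤ ‖m‖ := by
    apply le_of_sq_le_sq _ (norm_nonneg _)
    rw [norm_sub_sq_real, norm_smul, inner_smul_left, Real.norm_of_nonneg (by positivity)]
    simp only [conj_trivial]
    nlinarith
  have h3 : ‖m‖ ≤ ‖v‖ + l' * ‖G‖ := by
    rw [hm]; refine (norm_sub_le _ _).trans ?_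
    rw [norm_smul, Real.norm_of_nonneg hl']
  have h4 := neg_le_of_abs_le (abs_real_inner_le_norm ((2 * l) • g - m) v)
  have h5 : inner ℝ m v = ‖v‖ ^ 2 - l' * inner ℝ G v := by
    rw [hm, inner_sub_left, inner_smul_left, real_inner_self_eq_norm_sq]; simp
  have h6 := real_inner_le_norm G v
  rw [inner_sub_left, inner_smul_left, h5] at h4
  simp only [conj_trivial] at h4
  have h7 : ‖(2 * l) • g - m‖ * ‖v‖ ≤ (‖v‖ + l' * ‖G‖) * ‖v‖ :=
    mul_le_mul_of_nonneg_right (h2.trans h3) (norm_nonneg _)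
  have h8 := mul_le_mul_of_nonneg_left h6 hl'
  have h9 : - (l' * (‖v‖ * ‖G‖)) ≤ l * inner ℝ g v := by nlinarith
  have h10 : l * (-(l' / l * (‖v‖ * ‖G‖))) = - (l' * (‖v‖ * ‖G‖)) := by field_simp
  rw [← h10] at h9
  exact le_of_mul_le_mul_left h9 hl

theorem aux_lim (W W' k : ℝ → ℝ) (T : ℝ) (hT : 0 < T) (hW0 : ∀ t ≥ T, 0 ≤ W t)
    (hW : ∀ t ≥ T, HasDerivAt W (W' t) t) (hk : ∀ t ≥ T, W' t ≤ k t)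
    (hkint : IntegrableOn k (Ioi T)) (hWint : IntegrableOn (fun t => W t / t) (Ioi T)) :
    Tendsto W atTop (nhds 0) := by
  have hincr : ∀ s ≥ T, ∀ t ≥ s, W t - W s ≤ ∫ y in s..t, k y := by
    intro s hs t ht
    apply intervalIntegral.sub_le_integral_of_hasDeriv_right_of_le ht (g' := W')
    · intro u hu; exact (hW u (hs.le.trans hu.1)).continuousAt.continuousWithinAt
    · intro u hu; exact (hW u (hs.le.trans hu.1.le)).hasDerivWithinAt
    · rw [integrableOn_Icc_iff_integrableOn_Ioc]
      exact hkint.mono_set (fun u hu => lt_of_le_of_lt hs hu.1)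
    · intro u hu; exact hk u (hs.le.trans hu.1.le)
  have hlim := intervalIntegral_tendsto_integral_Ioi T hkint tendsto_id
  rw [Metric.tendsto_atTop]
  intro e he
  rw [Metric.tendsto_atTop] at hlim
  obtain ⟨s0, hs0⟩ := hlim (e / 4) (by positivity)
  obtain ⟨s, hs, hWs⟩ : ∃ s ≥ max s0 T, W s < e / 2 := by
    by_contra! hcon
    have hm : 0 < max s0 T := lt_max_of_lt_right hT
    apply not_integrableOn_Ioi_inv (a := max s0 T)
    have h1 : IntegrableOn (fun t => (2 / e) * (W t / t)) (Ioi (max s0 T)) :=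
      (hWint.mono_set (Ioi_subset_Ioi (le_max_right _ _))).const_mul _
    refine Integrable.mono' h1 (by exact (measurable_inv).aestronglyMeasurable) ?_
    filter_upwards [ae_restrict_mem measurableSet_Ioi] with t ht
    have ht0 : 0 < t := hm.trans ht
    have := hcon t (le_of_lt ht)
    rw [Real.norm_of_nonneg (by positivity)]
    have e1 : (2 / e) * (W t / t) = (2 / e * W t) * t⁻¹ := by ring
    rw [e1]
    apply le_mul_of_one_le_left (by positivity)
    rw [div_mul_eq_mul_div, le_div_iff₀ he]; linarith
  have hsT : T ≤ s := (le_max_right _ _).trans hs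
  have hss : s0 ≤ s := (le_max_left _ _).trans hs
  refine ⟨s, fun t ht => ?_⟩
  have a1 := hincr s hsT t ht
  have a2 := hs0 s hss
  have a3 := hs0 t (hss.trans ht)
  simp only [id, Real.dist_eq] at a2 a3
  have hii : ∀ u ≥ T, IntervalIntegrable k volume T u := by
    intro u hu
    rw [intervalIntegrable_iff_integrableOn_Ioc_of_le hu]
    exact hkint.mono_set (fun u hu => hu.1)
  have a4 := intervalIntegral.integral_interval_sub_left (hii t (hsT.trans ht)) (hii s hsT)
  rw [abs_lt] at a2 a3
  rw [Real.dist_eq, sub_zero, abs_of_nonneg (hW0 t (hsT.trans ht))]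
  linarith [a2.1, a2.2, a3.1, a3.2]

theorem aux_energy (E E' h : ℝ → ℝ) (T : ℝ) (hE0 : ∀ t ≥ T, 0 ≤ E t)
    (hE : ∀ t ≥ T, HasDerivAt E (E' t) t) (hh : ∀ t ≥ T, E' t ≤ - h t) (hh0 : ∀ t ≥ T, 0 ≤ h t)
    (hc : ContinuousOn h (Ici T)) : IntegrableOn h (Ioi T) ∧ ∀ t ≥ T, E t ≤ E T := by
  have hint : ∀ t ≥ T, IntegrableOn h (Icc T t) := fun t ht =>
    (hc.mono (fun u hu => hu.1)).integrableOn_Icc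
  have hincr : ∀ t ≥ T, E t - E T ≤ ∫ y in T..t, - h y := by
    intro t ht
    apply intervalIntegral.sub_le_integral_of_hasDeriv_right_of_le ht (g' := E')
    · intro u hu; exact (hE u hu.1).continuousAt.continuousWithinAt
    · intro u hu; exact (hE u hu.1.le).hasDerivWithinAt
    · exact (hint t ht).neg
    · intro u hu; exact hh u hu.1.le
  simp only [intervalIntegral.integral_neg] at hincr
  constructor
  · refine integrableOn_Ioi_of_intervalIntegral_norm_bounded (E T) T
      (fun t => ?_) tendsto_id (l := atTop) (b := id) ?_
    · rcases le_total T t with ht | ht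
      · exact (hint t ht).mono_set Ioc_subset_Icc_self
      · simp [Ioc_eq_empty_of_le ht]
    · filter_upwards [eventually_ge_atTop T] with t ht
      have : ∫ y in T..t, ‖h y‖ = ∫ y in T..t, h y := by
        apply intervalIntegral.integral_congr
        intro u hu
        rw [uIcc_of_le ht] at hu
        exact Real.norm_of_nonneg (hh0 u hu.1)
      simp only [id]
      rw [this]; linarith [hincr t ht, hE0 t ht]
  · intro t ht
    have := intervalIntegral.integral_nonneg ht (f := h) (μ := volume) (fun u hu => hh0 u hu.1)
    linarith [hincr t ht]


theorem aux_Ealg {H : Type*} [NormedAddCommGroup H] [InnerProductSpace ℝ H]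
    (t α q δ be be' bb w w' l' ph : ℝ) (X v G : H) (ht : 0 < t) (hδ : 0 < δ)
    (hq : q = α - 1 - δ) (hq0 : 0 < q) (hbe : 0 ≤ be) (hw : 0 < w) (hl' : 0 ≤ l')
    (hwdef : w = bb - be' - be / t) (hph : 0 ≤ ph) (hX : ph ≤ inner ℝ G X)
    (hA : 2 * δ * bb ≤ (α - 3) * w - t * w') :
    (2 * t * w + t ^ 2 * w' + δ * (be + t * be')) * ph
      + (t ^ 2 * w + δ * (t * be)) * (inner ℝ G v - l' / 2 * ‖G‖ ^ 2)
      + inner ℝ (q • X + t • (v + be • G)) ((q + 1 - α) • v - (t * w) • G)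
      + q * δ * inner ℝ X v ≤ -(δ * (t * bb * ph) + δ * (t * ‖v‖ ^ 2)) := by
  have e1 : inner ℝ (q • X + t • (v + be • G)) ((q + 1 - α) • v - (t * w) • G)
      = q * (-δ) * inner ℝ X v - q * (t * w) * inner ℝ G X + t * (-δ) * ‖v‖ ^ 2
        - t * (t * w) * inner ℝ G v + t * be * (-δ) * inner ℝ G v - t * be * (t * w) * ‖G‖ ^ 2 := by
    have : q + 1 - α = -δ := by linarith
    rw [this]
    simp only [inner_add_left, inner_sub_right, inner_smul_left, inner_smul_right, conj_trivial,
      smul_add, real_inner_self_eq_norm_sq]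
    rw [real_inner_comm v G, real_inner_comm X G]
    ring
  rw [e1]
  have e2 : be + t * be' = t * (bb - w) := by rw [hwdef]; field_simp; ring
  rw [e2]
  have i1 : q * (t * w) * ph ≤ q * (t * w) * inner ℝ G X :=
    mul_le_mul_of_nonneg_left hX (by positivity)
  have i2 : t * ph * (2 * δ * bb) ≤ t * ph * ((α - 3) * w - t * w') :=
    mul_le_mul_of_nonneg_left hA (by positivity)
  have i3 : 0 ≤ (t ^ 2 * w + δ * (t * be)) * (l' / 2 * ‖G‖ ^ 2) := by positivity
  have i4 : 0 ≤ t * be * (t * w) * ‖G‖ ^ 2 := by positivity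
  subst hq
  nlinarith

theorem aux_Walg {H : Type*} [NormedAddCommGroup H] [InnerProductSpace ℝ H]
    (t α be bb bb' l l' ph C M : ℝ) (v G g a : H) (ht : 0 < t) (hα : 1 < α)
    (hbe : 0 ≤ be) (hl : 0 < l)
    (hph : 0 ≤ ph) (hC : 2 * t * bb + t ^ 2 * bb' ≤ C * (t * bb))
    (hM : (l * ‖G‖) ^ 2 ≤ M)
    (ha : a + (α / t) • v + be • g + bb • G = 0)
    (hg : -(l' / l * (‖v‖ * ‖G‖)) ≤ inner ℝ g v) :
    (2 * t * bb + t ^ 2 * bb') * ph + t ^ 2 * bb * (inner ℝ G v - l' / 2 * ‖G‖ ^ 2)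
      + (t * ‖v‖ ^ 2 + t ^ 2 * inner ℝ v a)
      ≤ C * (t * bb * ph) + t * ‖v‖ ^ 2
        + M * max (l' ^ 2 * t ^ 3 * be ^ 2 / l ^ 4 - l' * t ^ 2 * bb / (2 * l ^ 2)) 0 := by
  have e1 : a = -((α / t) • v + be • g + bb • G) := by
    rw [eq_neg_iff_add_eq_zero, ← ha]; abel
  have e2 : t ^ 2 * inner ℝ v a = - (α * (t * ‖v‖ ^ 2)) - t ^ 2 * be * inner ℝ g v
      - t ^ 2 * bb * inner ℝ G v := by
    rw [e1]
    simp only [inner_add_right, inner_neg_right, inner_smul_right, real_inner_self_eq_norm_sq]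
    rw [real_inner_comm g v, real_inner_comm G v]
    field_simp
    ring
  rw [e2]
  set K := l' ^ 2 * t ^ 3 * be ^ 2 / l ^ 4 - l' * t ^ 2 * bb / (2 * l ^ 2) with hK
  have i1 : (l * ‖G‖) ^ 2 * K ≤ M * max K 0 := by
    calc (l * ‖G‖) ^ 2 * K ≤ (l * ‖G‖) ^ 2 * max K 0 :=
          mul_le_mul_of_nonneg_left (le_max_left _ _) (by positivity)
      _ ≤ _ := mul_le_mul_of_nonneg_right hM (le_max_right _ _)
  have e3 : (l * ‖G‖) ^ 2 * K = t * (t * be * (l' / l) * ‖G‖) ^ 2 - t ^ 2 * bb * (l' / 2 * ‖G‖ ^ 2) := by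
    rw [hK]; field_simp
  have i2 : t ^ 2 * be * -(l' / l * (‖v‖ * ‖G‖)) ≤ t ^ 2 * be * inner ℝ g v :=
    mul_le_mul_of_nonneg_left hg (by positivity)
  have i3 : t ^ 2 * be * (l' / l * (‖v‖ * ‖G‖)) ≤ t * ‖v‖ ^ 2 + t * (t * be * (l' / l) * ‖G‖) ^ 2 := by
    have : t ^ 2 * be * (l' / l * (‖v‖ * ‖G‖)) = t * (‖v‖ * (t * be * (l' / l) * ‖G‖)) := by ring
    rw [this, ← mul_add]
    apply mul_le_mul_of_nonneg_left _ ht.le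
    nlinarith [sq_nonneg (‖v‖ - (t * be * (l' / l) * ‖G‖)), sq_nonneg (‖v‖), sq_nonneg (t * be * (l' / l) * ‖G‖)]
  have i4 := mul_le_mul_of_nonneg_right hC hph
  have i5 : 0 ≤ (α - 1) * (t * ‖v‖ ^ 2) := mul_nonneg (by linarith) (by positivity)
  nlinarith

theorem aux_core
    {H : Type*} [NormedAddCommGroup H] [InnerProductSpace ℝ H]
    (t₀ α : ℝ) (ht₀ : 0 < t₀)
    (β b lam β' b' lam' w' f : ℝ → ℝ)
    (hβnonneg : ∀ t ≥ t₀, 0 ≤ β t)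
    (hbpos : ∀ t ≥ t₀, 0 < b t)
    (hlampos : ∀ t ≥ t₀, 0 < lam t)
    (hβ' : ∀ t ≥ t₀, HasDerivAt β (β' t) t)
    (hb' : ∀ t ≥ t₀, HasDerivAt b (b' t) t)
    (hlam' : ∀ t ≥ t₀, HasDerivAt lam (lam' t) t)
    (hw' : ∀ t ≥ t₀, HasDerivAt (fun s => b s - β' s - β s / s) (w' t) t)
    (x v acc p G G' : ℝ → H) (z : H)
    (hx : ∀ t ≥ t₀, HasDerivAt x (v t) t)
    (hv : ∀ t ≥ t₀, HasDerivAt v (acc t) t)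
    (hG' : ∀ t ≥ t₀, HasDerivAt G (G' t) t)
    (hpG : ∀ t > t₀, p t = x t - lam t • G t)
    (hode : ∀ t ≥ t₀, acc t + (α / t) • v t + β t • G' t + b t • G t = 0)
    (hα : 1 < α)
    (hlammono : MonotoneOn lam (Set.Ici t₀))
    (hw : ∀ t ≥ t₀, β' t + β t / t < b t)
    (hAs2 : ∃ ε, 0 < ε ∧ ε < α - 1 ∧
      ∀ t ≥ t₀, ε * b t ≤ (α - 3) * (b t - β' t - β t / t) - t * w' t)
    (hAs4 : ∫⁻ t in Set.Ici t₀, ENNReal.ofReal ((lam' t) ^ 2 * t ^ 3 * (β t) ^ 2 / (lam t) ^ 4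
      - lam' t * t ^ 2 * b t / (2 * (lam t) ^ 2)) < ⊤)
    (hAs : ∃ C > (0 : ℝ), ∀ t ≥ t₀, 2 * t * b t + t ^ 2 * b' t ≤ C * (t * b t))
    (hf0 : ∀ t > t₀, 0 ≤ f t)
    (hsub : ∀ s > t₀, ∀ u > t₀, f s + inner ℝ (G s) (p u - p s) ≤ f u)
    (hsubz : ∀ s > t₀, f s + inner ℝ (G s) (z - p s) ≤ 0) :
    Tendsto (fun t => t ^ 2 * b t * (f t + lam t / 2 * ‖G t‖ ^ 2) + t ^ 2 / 2 * ‖v t‖ ^ 2)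
      atTop (nhds 0) := by
  obtain ⟨ε, hε, hεα, hA⟩ := hAs2
  obtain ⟨C, hC, hC'⟩ := hAs
  have hlam'0 : ∀ t > t₀, 0 ≤ lam' t := by
    intro t ht
    have h1 : HasDerivWithinAt lam (lam' t) (Ici t₀) t := (hlam' t (le_of_lt ht)).hasDerivWithinAt
    have h2 := h1.derivWithin ((uniqueDiffOn_Ici t₀) t (le_of_lt ht))
    rw [← h2]
    exact hlammono.derivWithin_nonneg
  have hp' : ∀ t > t₀, HasDerivAt p (v t - (lam t • G' t + lam' t • G t)) t := by
    intro t ht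
    refine ((hx t (le_of_lt ht)).sub ((hlam' t (le_of_lt ht)).smul (hG' t (le_of_lt ht)))).congr_of_eventuallyEq ?_
    filter_upwards [aux_ev ht] with u hu
    exact hpG u hu
  set φ : ℝ → ℝ := fun t => f t + lam t / 2 * ‖G t‖ ^ 2 with hφdef
  have hφ' : ∀ t > t₀, HasDerivAt φ (inner ℝ (G t) (v t) - lam' t / 2 * ‖G t‖ ^ 2) t := by
    intro t ht
    have h1 := aux_deriv f G p t₀ t ht _ _ (hp' t ht) (hG' t (le_of_lt ht)) hsub
    have h2 := h1.add (((hlam' t (le_of_lt ht)).div_const 2).mul (hG' t (le_of_lt ht)).norm_sq)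
    refine h2.congr_deriv ?_
    simp only [inner_sub_right, inner_add_right, inner_smul_right, real_inner_self_eq_norm_sq]
    ring
  have hφ0 : ∀ t > t₀, 0 ≤ φ t := by
    intro t ht
    have := hf0 t ht
    have := hlampos t (le_of_lt ht)
    simp only [hφdef]; positivity
  have hXG : ∀ t > t₀, φ t ≤ inner ℝ (G t) (x t - z) := by
    intro t ht
    have h1 := hsubz t ht
    have h0 := hlampos t (le_of_lt ht)
    have e : x t - z = lam t • G t - (z - p t) := by rw [hpG t ht]; abel
    rw [e, inner_sub_right, inner_smul_right, real_inner_self_eq_norm_sq]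
    have : 0 ≤ lam t * ‖G t‖ ^ 2 := by positivity
    simp only [hφdef]; linarith
  have hGX : ∀ t > t₀, lam t * ‖G t‖ ≤ ‖x t - z‖ := by
    intro t ht
    have h0 := hlampos t (le_of_lt ht)
    have h1 := hsubz t ht
    have h2 := hf0 t ht
    have e : x t - z = lam t • G t - (z - p t) := by rw [hpG t ht]; abel
    have h3 : lam t * ‖G t‖ ^ 2 ≤ inner ℝ (G t) (x t - z) := by
      rw [e, inner_sub_right, inner_smul_right, real_inner_self_eq_norm_sq]; linarith
    have h4 := real_inner_le_norm (G t) (x t - z)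
    rcases (norm_nonneg (G t)).eq_or_lt with h5 | h5
    · rw [← h5, mul_zero]; positivity
    · apply le_of_mul_le_mul_left _ h5
      nlinarith
  set T := t₀ + 1 with hTdef
  have hT0 : 0 < T := by linarith
  have hTt : ∀ t ≥ T, t₀ < t := fun t ht => by linarith
  set w : ℝ → ℝ := fun s => b s - β' s - β s / s with hwdef
  have hwpos : ∀ t > t₀, 0 < w t := fun t ht => by
    have := hw t (le_of_lt ht); simp only [hwdef]; linarith
  obtain ⟨δ, hδ⟩ : ∃ δ, δ = ε / 2 := ⟨_, rfl⟩
  have hδ0 : 0 < δ := by linarith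
  obtain ⟨q, hq⟩ : ∃ q, q = α - 1 - δ := ⟨_, rfl⟩
  have hq0 : 0 < q := by linarith
  -- the energy
  set E : ℝ → ℝ := fun t => (t ^ 2 * w t + δ * (t * β t)) * φ t
    + 1 / 2 * ‖q • (x t - z) + t • (v t + β t • G t)‖ ^ 2 + q * δ / 2 * ‖x t - z‖ ^ 2 with hEdef
  set E' : ℝ → ℝ := fun t => (2 * t * w t + t ^ 2 * w' t + δ * (β t + t * β' t)) * φ t
      + (t ^ 2 * w t + δ * (t * β t)) * (inner ℝ (G t) (v t) - lam' t / 2 * ‖G t‖ ^ 2)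
      + inner ℝ (q • (x t - z) + t • (v t + β t • G t)) ((q + 1 - α) • v t - (t * w t) • G t)
      + q * δ * inner ℝ (x t - z) (v t) with hE'def
  have hE : ∀ t ≥ T, HasDerivAt E (E' t) t := by
    intro t ht
    have ht' := hTt t ht
    have htle : t ≥ t₀ := le_of_lt ht'
    have ht0 : 0 < t := by linarith
    have d1 := ((((hasDerivAt_id t).pow 2).mul (hw' t htle)).add
      (((hasDerivAt_id t).mul (hβ' t htle)).const_mul δ)).mul (hφ' t ht')
    have dX := (hx t htle).sub_const z
    have dU := (dX.const_smul q).add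
      ((hasDerivAt_id t).smul ((hv t htle).add ((hβ' t htle).smul (hG' t htle))))
    have d2 := dU.norm_sq.const_mul (1 / 2)
    have d3 := dX.norm_sq.const_mul (q * δ / 2)
    have d := (d1.add d2).add d3
    refine d.congr_deriv ?_
    have e1 : acc t = -((α / t) • v t + β t • G' t + b t • G t) := by
      rw [eq_neg_iff_add_eq_zero, ← hode t htle]; abel
    have eU : q • v t + (t • (acc t + (β t • G' t + β' t • G t)) + (1:ℝ) • (v t + β t • G t))
        = (q + 1 - α) • v t - (t * w t) • G t := by
      rw [e1]
      have : t * w t = t * b t - t * β' t - β t := by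
        simp only [hwdef]; field_simp
      rw [this]
      have h3 : t • ((α / t) • v t) = α • v t := by
        rw [smul_smul]; congr 1; field_simp
      have : t • (-((α / t) • v t + β t • G' t + b t • G t) + (β t • G' t + β' t • G t))
        = - (t • ((α / t) • v t)) + (t * (β' t - b t)) • G t := by module
      rw [this, h3]; module
    simp only [hE'def]
    rw [← eU]
    simp
    ring
  set h : ℝ → ℝ := fun t => δ * (t * b t * φ t) + δ * (t * ‖v t‖ ^ 2) with hhdef
  have hE'le : ∀ t ≥ T, E' t ≤ - h t := by
    intro t ht
    have ht' := hTt t ht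
    have htle : t ≥ t₀ := le_of_lt ht'
    refine aux_Ealg t α q δ (β t) (β' t) (b t) (w t) (w' t) (lam' t) (φ t) _ _ _ (by linarith)
      hδ0 hq hq0 (hβnonneg t htle) (hwpos t ht') (hlam'0 t ht') rfl (hφ0 t ht') (hXG t ht') ?_
    have := hA t htle
    rw [hδ]; simp only [hwdef]; linarith
  have hE0 : ∀ t ≥ T, q * δ / 2 * ‖x t - z‖ ^ 2 ≤ E t := by
    intro t ht
    have ht' := hTt t ht
    have ht0 : 0 < t := by linarith
    have := hφ0 t ht'
    have := hwpos t ht'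
    have := hβnonneg t (le_of_lt ht')
    have : 0 ≤ (t ^ 2 * w t + δ * (t * β t)) * φ t
      + 1 / 2 * ‖q • (x t - z) + t • (v t + β t • G t)‖ ^ 2 := by positivity
    simp only [hEdef]; linarith
  have hc1 : ContinuousOn (fun t => t * b t * φ t) (Ici T) := by
    intro t ht
    have ht' := hTt t ht
    exact ((continuousAt_id.mul (hb' t (le_of_lt ht')).continuousAt).mul
      (hφ' t ht').continuousAt).continuousWithinAt
  have hc2 : ContinuousOn (fun t => t * ‖v t‖ ^ 2) (Ici T) := by
    intro t ht
    have ht' := hTt t ht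
    exact (continuousAt_id.mul ((hv t (le_of_lt ht')).continuousAt.norm.pow 2)).continuousWithinAt
  have hn1 : ∀ t ≥ T, 0 ≤ t * b t * φ t := by
    intro t ht
    have ht' := hTt t ht
    have := hφ0 t ht'
    have := hbpos t (le_of_lt ht')
    have ht0 : 0 < t := by linarith
    positivity
  have hn2 : ∀ t ≥ T, 0 ≤ t * ‖v t‖ ^ 2 := by
    intro t ht
    have ht' := hTt t ht
    have ht0 : 0 < t := by linarith
    positivity
  obtain ⟨hint, hEle⟩ := aux_energy E E' h T
    (fun t ht => le_trans (by positivity) (hE0 t ht)) hE hE'le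
    (fun t ht => add_nonneg (mul_nonneg hδ0.le (hn1 t ht)) (mul_nonneg hδ0.le (hn2 t ht)))
    ((hc1.const_mul δ).add (hc2.const_mul δ))
  have hi1 : IntegrableOn (fun t => t * b t * φ t) (Ioi T) := by
    refine Integrable.mono' (hint.const_mul (1 / δ))
      ((hc1.mono Ioi_subset_Ici_self).aestronglyMeasurable measurableSet_Ioi) ?_
    filter_upwards [ae_restrict_mem measurableSet_Ioi] with t ht
    rw [Real.norm_of_nonneg (hn1 t (le_of_lt ht))]
    have : 1 / δ * h t = t * b t * φ t + t * ‖v t‖ ^ 2 := by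
      simp only [hhdef]; field_simp
    rw [this]; linarith [hn2 t (le_of_lt ht)]
  have hi2 : IntegrableOn (fun t => t * ‖v t‖ ^ 2) (Ioi T) := by
    refine Integrable.mono' (hint.const_mul (1 / δ))
      ((hc2.mono Ioi_subset_Ici_self).aestronglyMeasurable measurableSet_Ioi) ?_
    filter_upwards [ae_restrict_mem measurableSet_Ioi] with t ht
    rw [Real.norm_of_nonneg (hn2 t (le_of_lt ht))]
    have : 1 / δ * h t = t * b t * φ t + t * ‖v t‖ ^ 2 := by
      simp only [hhdef]; field_simp
    rw [this]; linarith [hn1 t (le_of_lt ht)]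
  set M := E T / (q * δ / 2) with hMdef
  have hM : ∀ t ≥ T, (lam t * ‖G t‖) ^ 2 ≤ M := by
    intro t ht
    have ht' := hTt t ht
    have h0 := hlampos t (le_of_lt ht')
    have h1 : (lam t * ‖G t‖) ^ 2 ≤ ‖x t - z‖ ^ 2 :=
      pow_le_pow_left₀ (by positivity) (hGX t ht') 2
    refine h1.trans ?_
    rw [hMdef, le_div_iff₀ (by positivity)]
    linarith [hE0 t ht, hEle t ht]
  -- integrability of the last term
  set K : ℝ → ℝ := fun t => (lam' t) ^ 2 * t ^ 3 * (β t) ^ 2 / (lam t) ^ 4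
      - lam' t * t ^ 2 * b t / (2 * (lam t) ^ 2) with hKdef
  have hKm : AEMeasurable K (volume.restrict (Ioi T)) := by
    have m0 : AEMeasurable lam' (volume.restrict (Ioi T)) := by
      refine ⟨deriv lam, measurable_deriv lam, ?_⟩
      filter_upwards [ae_restrict_mem measurableSet_Ioi] with t ht
      exact ((hlam' t (le_of_lt (hTt t (le_of_lt ht)))).deriv).symm
    have mk : ∀ g g' : ℝ → ℝ, (∀ t ≥ t₀, HasDerivAt g (g' t) t) →
        AEMeasurable g (volume.restrict (Ioi T)) := by
      intro g g' hg
      apply ContinuousOn.aemeasurable _ measurableSet_Ioi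
      intro t ht
      exact (hg t (le_of_lt (hTt t (le_of_lt ht)))).continuousAt.continuousWithinAt
    have m1 := mk β β' hβ'
    have m2 := mk b b' hb'
    have m3 := mk lam lam' hlam'
    have m4 : AEMeasurable (fun t : ℝ => t) (volume.restrict (Ioi T)) := aemeasurable_id
    exact ((((m0.pow_const 2).mul (m4.pow_const 3)).mul (m1.pow_const 2)).div (m3.pow_const 4)).sub
      (((m0.mul (m4.pow_const 2)).mul m2).div ((m3.pow_const 2).const_mul 2))
  have hi3 : IntegrableOn (fun t => max (K t) 0) (Ioi T) := by
    refine ⟨(hKm.max aemeasurable_const).aestronglyMeasurable, ?_⟩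
    have hnn : ∀ᵐ t ∂(volume.restrict (Ioi T)), (0:ℝ) ≤ (fun t => max (K t) 0) t :=
      Eventually.of_forall fun t => le_max_right _ _
    rw [hasFiniteIntegral_iff_ofReal hnn]
    refine lt_of_le_of_lt ?_ hAs4
    refine le_trans (le_of_eq ?_) (lintegral_mono_set (s := Ioi T) (fun t ht => le_of_lt (hTt t (le_of_lt ht))))
    apply lintegral_congr
    intro t
    simp [ENNReal.ofReal_max, hKdef]
  refine aux_lim _ (fun t => (2 * t * b t + t ^ 2 * b' t) * φ t
      + t ^ 2 * b t * (inner ℝ (G t) (v t) - lam' t / 2 * ‖G t‖ ^ 2)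
      + (t * ‖v t‖ ^ 2 + t ^ 2 * inner ℝ (v t) (acc t)))
    (fun t => C * (t * b t * φ t) + t * ‖v t‖ ^ 2 + M * max (K t) 0) T hT0 ?_ ?_ ?_ ?_ ?_
  · intro t ht
    have ht' := hTt t ht
    have := hφ0 t ht'
    have := hbpos t (le_of_lt ht')
    positivity
  · intro t ht
    have ht' := hTt t ht
    have htle : t ≥ t₀ := le_of_lt ht'
    have d := ((((hasDerivAt_id t).pow 2).mul (hb' t htle)).mul (hφ' t ht')).add
      ((((hasDerivAt_id t).pow 2).div_const 2).mul (hv t htle).norm_sq)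
    refine d.congr_deriv ?_
    simp
    ring
  · intro t ht
    have ht' := hTt t ht
    have htle : t ≥ t₀ := le_of_lt ht'
    refine aux_Walg t α (β t) (b t) (b' t) (lam t) (lam' t) (φ t) C M _ _ (G' t) _ (by linarith) hα
      (hβnonneg t htle) (hlampos t htle) (hφ0 t ht') (hC' t htle) (hM t ht)
      (hode t htle) ?_
    exact aux_Gv (lam t) (lam' t) (hlampos t htle) (hlam'0 t ht') _ _ _ _ (by abel)
      (aux_mono_s13 f G p t₀ t ht' _ _ (hp' t ht') (hG' t htle) hsub)
  · exact ((hi1.const_mul C).add hi2).add (hi3.const_mul M)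
  · refine (hi1.add (hi2.const_mul (1 / 2))).congr_fun ?_ measurableSet_Ioi
    intro t ht
    have ht0 : 0 < t := hT0.trans ht
    simp only [Pi.add_apply]
    field_simp
    simp only [hφdef]
    ring

theorem aux_sub {H : Type*} [NormedAddCommGroup H] [InnerProductSpace ℝ H]
    (Φ : H → EReal) (hΦbot : ∀ y, Φ y ≠ ⊥) (hΦconv : EConvexOn Φ) (l : ℝ) (hl : 0 < l)
    (x p : H) (hp : IsProxPt Φ l x p) (hpt : Φ p ≠ ⊤) (y : H) (hy : Φ y ≠ ⊤) :
    (Φ p).toReal + inner ℝ (l⁻¹ • (x - p)) (y - p) ≤ (Φ y).toReal := by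
  apply aux_prox l _ _ hl
  intro a ha ha1
  have h1 := hp ((1 - a) • p + a • y)
  have h2 := hΦconv p y (1 - a) a (by linarith) ha.le (by ring)
  have h3 := h1.trans (add_le_add_left h2 _)
  rw [← EReal.coe_toReal hpt (hΦbot p), ← EReal.coe_toReal hy (hΦbot y)] at h3
  exact_mod_cast h3

theorem aux_fin {H : Type*} [NormedAddCommGroup H] [InnerProductSpace ℝ H]
    (Φ : H → EReal) (l : ℝ)
    (x p : H) (hp : IsProxPt Φ l x p) (y : H) (hy : Φ y ≠ ⊤) : Φ p ≠ ⊤ := by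
  intro h
  have h1 := hp y
  rw [h, EReal.top_add_coe, top_le_iff] at h1
  exact (EReal.add_lt_top hy (EReal.coe_ne_top _)).ne h1

theorem prox_distance_little_o
    {H : Type*} [NormedAddCommGroup H] [InnerProductSpace ℝ H] [CompleteSpace H]
    (Φ : H → EReal)
    (hΦbot : ∀ y, Φ y ≠ ⊥) (hΦproper : ∃ y, Φ y ≠ ⊤)
    (hΦconv : EConvexOn Φ) (hΦlsc : LowerSemicontinuous Φ)
    (t₀ α : ℝ) (ht₀ : 0 < t₀)
    (β b lam β' b' lam' w' : ℝ → ℝ)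
    (hβnonneg : ∀ t ≥ t₀, 0 ≤ β t)
    (hbpos : ∀ t ≥ t₀, 0 < b t)
    (hlampos : ∀ t ≥ t₀, 0 < lam t)
    (hβ' : ∀ t ≥ t₀, HasDerivAt β (β' t) t)
    (hb' : ∀ t ≥ t₀, HasDerivAt b (b' t) t)
    (hlam' : ∀ t ≥ t₀, HasDerivAt lam (lam' t) t)
    (hw' : ∀ t ≥ t₀, HasDerivAt (fun s => b s - β' s - β s / s) (w' t) t)
    (x v acc p G' : ℝ → H)
    (hx : ∀ t ≥ t₀, HasDerivAt x (v t) t)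
    (hv : ∀ t ≥ t₀, HasDerivAt v (acc t) t)
    (hp : ∀ t ≥ t₀, IsProxPt Φ (lam t) (x t) (p t))
    (hG' : ∀ t ≥ t₀, HasDerivAt (fun s => (lam s)⁻¹ • (x s - p s)) (G' t) t)
    (hode : ∀ t ≥ t₀, acc t + (α / t) • v t + β t • G' t
        + b t • ((lam t)⁻¹ • (x t - p t)) = 0)
    (hα : 1 < α)
    (hlammono : MonotoneOn lam (Set.Ici t₀))
    (hβmono : MonotoneOn β (Set.Ici t₀))
    (hw : ∀ t ≥ t₀, β' t + β t / t < b t)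
    (hAs2 : ∃ ε, 0 < ε ∧ ε < α - 1 ∧
      ∀ t ≥ t₀, ε * b t ≤ (α - 3) * (b t - β' t - β t / t) - t * w' t)
    (hAs4 : ∫⁻ t in Set.Ici t₀, ENNReal.ofReal ((lam' t) ^ 2 * t ^ 3 * (β t) ^ 2 / (lam t) ^ 4
      - lam' t * t ^ 2 * b t / (2 * (lam t) ^ 2)) < ⊤)
    (hAs : ∃ C > (0 : ℝ), ∀ t ≥ t₀, 2 * t * b t + t ^ 2 * b' t ≤ C * (t * b t))
    (hargmin : ∃ z, ∀ y, Φ z ≤ Φ y)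
    :
    Filter.Tendsto (fun t => t * Real.sqrt (b t) / Real.sqrt (lam t) * ‖p t - x t‖)
      Filter.atTop (nhds 0) := by
  obtain ⟨z, hz⟩ := hargmin
  have hzt : Φ z ≠ ⊤ := by
    obtain ⟨y, hy⟩ := hΦproper
    intro h
    have := hz y
    rw [h, top_le_iff] at this
    exact hy this
  have hpt : ∀ t ≥ t₀, Φ (p t) ≠ ⊤ := fun t ht => aux_fin Φ _ _ _ (hp t ht) z hzt
  have hs : ∀ t ≥ t₀, ∀ y, Φ y ≠ ⊤ →
      (Φ (p t)).toReal + inner ℝ ((lam t)⁻¹ • (x t - p t)) (y - p t) ≤ (Φ y).toReal :=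
    fun t ht y hy => aux_sub Φ hΦbot hΦconv _ (hlampos t ht) _ _ (hp t ht) (hpt t ht) y hy
  have hf0 : ∀ t ≥ t₀, 0 ≤ (Φ (p t)).toReal - (Φ z).toReal := by
    intro t ht
    have := EReal.toReal_le_toReal (hz (p t)) (hΦbot z) (hpt t ht)
    linarith
  have key := aux_core t₀ α ht₀ β b lam β' b' lam' w' (fun t => (Φ (p t)).toReal - (Φ z).toReal)
    hβnonneg hbpos hlampos hβ' hb' hlam' hw' x v acc p (fun s => (lam s)⁻¹ • (x s - p s)) G' z
    hx hv hG' (by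
      intro t ht
      have := (hlampos t (le_of_lt ht)).ne'
      simp only [smul_smul, mul_inv_cancel₀ this, one_smul]
      abel) hode hα hlammono hw hAs2 hAs4 hAs
    (fun t ht => hf0 t (le_of_lt ht))
    (by
      intro s hs' u hu
      have := hs s (le_of_lt hs') (p u) (hpt u (le_of_lt hu))
      linarith)
    (by
      intro s hs'
      have := hs s (le_of_lt hs') z hzt
      linarith)
  have key2 := (key.const_mul 2).sqrt
  rw [mul_zero, Real.sqrt_zero] at key2
  refine squeeze_zero' ?_ ?_ key2
  · filter_upwards [eventually_ge_atTop t₀] with t ht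
    have : 0 < t := by linarith
    positivity
  · filter_upwards [eventually_ge_atTop t₀] with t ht
    have ht0 : 0 < t := by linarith
    have hl := hlampos t ht
    have hb0 := hbpos t ht
    have h0 := hf0 t ht
    apply Real.le_sqrt_of_sq_le
    have e : (t * √(b t) / √(lam t) * ‖p t - x t‖) ^ 2
        = 2 * (t ^ 2 * b t * (lam t / 2 * ‖(lam t)⁻¹ • (x t - p t)‖ ^ 2)) := by
      rw [norm_smul, norm_inv, Real.norm_of_nonneg hl.le, norm_sub_rev (p t), mul_pow, div_pow,
        mul_pow, Real.sq_sqrt hb0.le, Real.sq_sqrt hl.le]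
      field_simp
    rw [e]
    have h1 : 0 ≤ t ^ 2 * b t * ((Φ (p t)).toReal - (Φ z).toReal) := by positivity
    have h2 : 0 ≤ t ^ 2 / 2 * ‖v t‖ ^ 2 := by positivity
    nlinarith
end
end

section
/- Let t₀ > 0, α > 1, n, m ∈ ℝ, β ≥ 0 and b > 0 with α − 3 > n, 0 ≤ m ≤ n + 1, and b > β·(m+1)·(α−m−2)/((α−3−n)·t₀^{n−m+1}). Define b(t) = b·tⁿ, β(t) = β·t^m and w(t) = b(t) − β'(t) − β(t)/t = b·tⁿ − β·(m+1)·t^{m−1} for t ≥ t₀. Then there exists ε ∈ (0, α−1) such that (α−3)·w(t) − t·w'(t) ≥ ε·b(t) for every t ≥ t₀. -/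
open Real

theorem polynomial_parameters_eps_condition
    (t₀ α n m β b : ℝ) (ht₀ : 0 < t₀) (hα : 1 < α) (hβ : 0 ≤ β) (hb : 0 < b)
    (hn : α - 3 > n) (hm0 : 0 ≤ m) (hm1 : m ≤ n + 1)
    (hbgt : b > β * (m + 1) * (α - m - 2) / ((α - 3 - n) * t₀ ^ (n - m + 1))) :
    ∃ ε, 0 < ε ∧ ε < α - 1 ∧ ∀ t ≥ t₀,
      ε * (b * t ^ n) ≤
        (α - 3) * (b * t ^ n - β * (m + 1) * t ^ (m - 1))
          - t * deriv (fun s : ℝ => b * s ^ n - β * (m + 1) * s ^ (m - 1)) t := by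
  have hd : 0 < α - 3 - n := by linarith
  have hP : 0 < t₀ ^ (n - m + 1) := Real.rpow_pos_of_pos ht₀ _
  have hC : 0 ≤ β * (m + 1) * (α - m - 2) :=
    mul_nonneg (mul_nonneg hβ (by linarith)) (by linarith)
  generalize hPd : t₀ ^ (n - m + 1) = P at *
  generalize hCd : β * (m + 1) * (α - m - 2) = C at *
  have h1 : C < b * ((α - 3 - n) * P) := (div_lt_iff₀ (mul_pos hd hP)).1 hbgt
  have hPb : 0 < P * b := mul_pos hP hb
  refine ⟨(α - 3 - n) - C / (P * b), ?_, ?_, ?_⟩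
  · rw [sub_pos, div_lt_iff₀ hPb]
    linarith
  · have : 0 ≤ C / (P * b) := div_nonneg hC hPb.le
    linarith
  · intro t ht
    have htp : 0 < t := lt_of_lt_of_le ht₀ ht
    have hder : HasDerivAt (fun s : ℝ => b * s ^ n - β * (m + 1) * s ^ (m - 1))
        (b * (n * t ^ (n - 1)) - β * (m + 1) * ((m - 1) * t ^ (m - 1 - 1))) t :=
      ((Real.hasDerivAt_rpow_const (Or.inl htp.ne')).const_mul b).sub
        ((Real.hasDerivAt_rpow_const (Or.inl htp.ne')).const_mul _)
    rw [hder.deriv]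
    have e1 : t * t ^ (n - 1) = t ^ n := by
      rw [Real.rpow_sub_one htp.ne']; field_simp
    have e2 : t * t ^ (m - 1 - 1) = t ^ (m - 1) := by
      rw [Real.rpow_sub_one htp.ne' (m - 1)]; field_simp
    have hle : P * t ^ (m - 1) ≤ t ^ n := by
      have : t ^ n = t ^ (n - m + 1) * t ^ (m - 1) := by
        rw [← Real.rpow_add htp]; congr 1; ring
      rw [this, ← hPd]
      exact mul_le_mul_of_nonneg_right
        (Real.rpow_le_rpow ht₀.le ht (by linarith)) (Real.rpow_pos_of_pos htp _).le
    have hle2 : C * t ^ (m - 1) ≤ C / P * t ^ n := by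
      have h := mul_le_mul_of_nonneg_left hle (div_nonneg hC hP.le)
      have e : C / P * (P * t ^ (m - 1)) = C * t ^ (m - 1) := by field_simp
      linarith
    have e3 : ((α - 3 - n) - C / (P * b)) * (b * t ^ n)
        = (α - 3 - n) * (b * t ^ n) - C / P * t ^ n := by field_simp
    have e4 : (α - 3) * (b * t ^ n - β * (m + 1) * t ^ (m - 1))
          - t * (b * (n * t ^ (n - 1)) - β * (m + 1) * ((m - 1) * t ^ (m - 1 - 1)))
        = (α - 3 - n) * (b * t ^ n) - C * t ^ (m - 1) := by
      rw [← hCd]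
      linear_combination (-b * n) * e1 + β * (m + 1) * (m - 1) * e2
    rw [e3, e4]
    linarith
end
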